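/- Fix an integer N ≥ 0 and scalars D_0, …, D_{N−1} ∈ K. With the modes and conventions of the context (untwisted bosons b_k, k ∈ ℤ, with zero mode b_0 = √ℏ ∂_{x^0}, and untwisted Neveu–Schwarz fermions ψ_r, r ∈ ℤ+1/2), define for i ∈ ℤ_{≥0}: H_i = ℏ ∂_{x^i} + (ℏ/2) Σ_{k∈ℤ} :b_k b_{i+N−1−k}: + (ℏ/2) Σ_{r∈ℤ+1/2} (r + (i+N−1)/2) :ψ_{−r} ψ_{i+N−1+r}: + ℏ D_i [i ≤ N−1], and for r ∈ ℤ_{≥0} + 1/2: F_r = ℏ ∂_{θ^{r+1/2}} + ℏ Σ_{m∈ℤ} ψ_{r+N−1−m} b_m. Then these operators form a representation of a subalgebra of the N=1 super Virasoro algebra in the Neveu–Schwarz sector: for all i, j ∈ ℤ_{≥0} and r, s ∈ ℤ_{≥0}+1/2, [H_i, H_j] = ℏ (i−j) H_{i+j+N−1}, [H_i, F_r] = ℏ ((i−N+1)/2 − r) F_{i+r+N−1}, and {F_r, F_s} = 2ℏ H_{r+s+N−1}; in each relation, whenever the subscript on the right-hand side lies outside the allowed index range the corresponding scalar coefficient vanishes,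 so the relation is read with right-hand side 0. -/

import Mathlib

/-!
Statement 7: the untwisted free boson–fermion representation of a subalgebra of the N=1
super Virasoro algebra in the Neveu–Schwarz sector. Bosons `b_k`, `k ∈ ℤ`, act on
`P = K[t,t⁻¹][x⁰,x¹,…]` (with `ℏ = t²`, `√ℏ = t`), Neveu–Schwarz fermions `ψ_r`,
`r ∈ ℤ+1/2`, act on `Λ(θ¹,θ²,…)`; a fermionic index `r = n + 1/2 ∈ ℤ + 1/2` is
parametrised by `n ∈ ℤ` throughout.
-/

set_option synthInstance.maxHeartbeats 1000000
set_option maxHeartbeats 1000000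

noncomputable section
open TensorProduct

variable (K : Type) [Field K] [CharZero K]

/-- `R = K[t,t⁻¹]`, with `ℏ = t²`, `√ℏ = t`. -/
abbrev R := LaurentPolynomial K
/-- `ℏ = t² ∈ R`. -/
def hb : R K := LaurentPolynomial.T 2
/-- A scalar `c : K` viewed in `R`. -/
def cs (c : K) : R K := LaurentPolynomial.C c
/-- The even part `P = R[x⁰,x¹,x²,…]`. -/
abbrev Pev := MvPolynomial ℕ (R K)
/-- The odd part `Λ(θ¹,θ²,…)`; generators are indexed by `ℕ+`. -/
abbrev Podd := ExteriorAlgebra (R K) (ℕ+ →₀ R K)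
/-- The full carrier `S = P ⊗_R Λ`. -/
abbrev SuperSpace := Pev K ⊗[R K] Podd K

/-- `∂_{x^a}`, acting through the polynomial factor. -/
def dX (a : ℕ) : SuperSpace K → SuperSpace K :=
  LinearMap.rTensor (Podd K) (MvPolynomial.pderiv a).toLinearMap

/-- Multiplication by `x^a`, acting through the polynomial factor. -/
def mX (a : ℕ) : SuperSpace K → SuperSpace K :=
  LinearMap.rTensor (Podd K) (LinearMap.mulLeft (R K) (MvPolynomial.X a))

/-- `∂_{θ^a}` (interior product with the dual basis vector), acting through the odd factor. -/
def dT (a : ℕ+) : SuperSpace K → SuperSpace K :=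
  LinearMap.lTensor (Pev K) (CliffordAlgebra.contractLeft (Finsupp.lapply a))

/-- Left multiplication by `θ^a`, acting through the odd factor. -/
def mT (a : ℕ+) : SuperSpace K → SuperSpace K :=
  LinearMap.lTensor (Pev K)
    (LinearMap.mulLeft (R K) (ExteriorAlgebra.ι (R K) (Finsupp.single a 1)))

/-- `∂_{x^a}` for `a ∈ ℤ`, vanishing for `a < 0`. -/
def dXi (a : ℤ) : SuperSpace K → SuperSpace K :=
  fun v => if 0 ≤ a then dX K a.toNat v else 0

/-- `∂_{θ^a}` for `a ∈ ℤ`, vanishing for `a < 1`. -/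
def dTi (a : ℤ) : SuperSpace K → SuperSpace K :=
  fun v => if h : 1 ≤ a then dT K ⟨a.toNat, by omega⟩ v else 0

/-- The untwisted boson mode `b_k`: `b_k = √ℏ ∂_{x^k}` for `k ≥ 0`,
`b_{−k} = (k/√ℏ) x^k` for `k ≥ 1`. -/
def bos (k : ℤ) : SuperSpace K → SuperSpace K :=
  if 0 ≤ k then fun v => (LaurentPolynomial.T 1 : R K) • dX K k.toNat v
  else fun v => (((-k : ℤ) : R K) * LaurentPolynomial.T (-1)) • mX K (-k).toNat v

/-- The untwisted Neveu–Schwarz fermion mode `ψ_{n+1/2}`: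
`ψ_r = √ℏ ∂_{θ^{r+1/2}}` and `ψ_{−r} = (1/√ℏ) θ^{r+1/2}` for `r ∈ ℤ_{≥0}+1/2`. -/
def fer (n : ℤ) : SuperSpace K → SuperSpace K :=
  if h : 0 ≤ n then fun v => (LaurentPolynomial.T 1 : R K) • dT K ⟨(n + 1).toNat, by omega⟩ v
  else fun v => (LaurentPolynomial.T (-1) : R K) • mT K ⟨(-n).toNat, by omega⟩ v

/-- The normally ordered boson bilinear `:b_α b_β:`. -/
def nb (α β : ℤ) : SuperSpace K → SuperSpace K :=
  if α ≤ β then fun v => bos K α (bos K β v) else fun v => bos K β (bos K α v)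

/-- The normally ordered fermion bilinear `:ψ_{n+1/2} ψ_{m+1/2}:` (indices parametrised by
the integers `n`, `m`). -/
def nf (n m : ℤ) : SuperSpace K → SuperSpace K :=
  if n ≤ m then fun v => fer K n (fer K m v) else fun v => -(fer K m (fer K n v))

/-- `H_i = ℏ ∂_{x^i} + (ℏ/2) Σ_{k∈ℤ} :b_k b_{i+N−1−k}:
        + (ℏ/2) Σ_{r∈ℤ+1/2} (r + (i+N−1)/2) :ψ_{−r} ψ_{i+N−1+r}: + ℏ D_i [i ≤ N−1]`,
with the fermionic sum parametrised by `r = n + 1/2`, `n ∈ ℤ`, so that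
`r + (i+N−1)/2 = (2n+i+N)/2`, `ψ_{−r} = ψ` with parameter `−n−1` and `ψ_{i+N−1+r} = ψ`
with parameter `i+N−1+n`. -/
def Hop (N : ℤ) (D : ℤ → K) (i : ℤ) : SuperSpace K → SuperSpace K := fun v =>
  hb K • dXi K i v
    + (cs K (2 : K)⁻¹ * hb K) • (∑ᶠ k : ℤ, nb K k (i + N - 1 - k) v)
    + (cs K (2 : K)⁻¹ * hb K) •
        (∑ᶠ n : ℤ, (((2 * n + i + N : ℤ) : R K) * cs K (2 : K)⁻¹) •
          nf K (-n - 1) (i + N - 1 + n) v)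
    + (if i ≤ N - 1 then (hb K * cs K (D i)) • v else 0)

/-- `F_{n+1/2} = ℏ ∂_{θ^{n+1}} + ℏ Σ_{m∈ℤ} ψ_{n+1/2+N−1−m} b_m`. -/
def Fop (N : ℤ) (n : ℤ) : SuperSpace K → SuperSpace K := fun v =>
  hb K • dTi K (n + 1) v + hb K • (∑ᶠ m : ℤ, fer K (n + N - 1 - m) (bos K m v))

/-- Abstract Fock module: boson modes `b`, fermion modes `f` (`f n = ψ_{n+1/2}`), the
multiplication `q` by the zero-mode coordinate, a vacuum, and cyclicity. -/
structure Fock (A V : Type*) [CommRing A] [AddCommGroup V] [Module A V] where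
  b : ℤ → V →ₗ[A] V
  f : ℤ → V →ₗ[A] V
  q : V →ₗ[A] V
  τ : A
  c : A
  hc : 2 * c = 1
  vac : V
  bb : ∀ m n v, b m (b n v) = b n (b m v) + (if m + n = 0 then (m : A) else 0) • v
  ff : ∀ m n v, f m (f n v) = -f n (f m v) + (if m + n + 1 = 0 then (1 : A) else 0) • v
  fb : ∀ m n v, f m (b n v) = b n (f m v)
  bq : ∀ m v, b m (q v) = q (b m v) + (if m = 0 then τ else 0) • v
  fq : ∀ m v, f m (q v) = q (f m v)
  bvac : ∀ m, 0 ≤ m → b m vac = 0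
  fvac : ∀ m, 0 ≤ m → f m vac = 0
  cyc : ∀ W : Submodule A V, vac ∈ W → (∀ v ∈ W, q v ∈ W) → (∀ k, k < 0 → ∀ v ∈ W, b k v ∈ W) →
    (∀ k, k < 0 → ∀ v ∈ W, f k v ∈ W) → W = ⊤

namespace Fock

variable {A V : Type*} [CommRing A] [AddCommGroup V] [Module A V] (F : Fock A V)

/-- vectors killed by all high modes -/
def fin : Submodule A V where
  carrier := {v | ∃ M : ℤ, ∀ k, M ≤ k → F.b k v = 0 ∧ F.f k v = 0}
  zero_mem' := ⟨0, fun k _ => by simp⟩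
  add_mem' := by
    rintro v w ⟨M, hM⟩ ⟨M', hM'⟩
    refine ⟨max M M', fun k hk => ?_⟩
    have h1 := hM k (le_trans (le_max_left _ _) hk)
    have h2 := hM' k (le_trans (le_max_right _ _) hk)
    simp [h1, h2]
  smul_mem' := by
    rintro a v ⟨M, hM⟩
    exact ⟨M, fun k hk => by simp [hM k hk]⟩

theorem locfin (v : V) : ∃ M : ℤ, ∀ k, M ≤ k → F.b k v = 0 ∧ F.f k v = 0 := by
  have h : F.fin = ⊤ := by
    apply F.cyc
    · exact ⟨0, fun k hk => ⟨F.bvac k hk, F.fvac k hk⟩⟩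
    · rintro v ⟨M, hM⟩
      refine ⟨max M 1, fun k hk => ?_⟩
      have h1 := hM k (le_trans (le_max_left _ _) hk)
      have h2 : k ≠ 0 := by have := le_trans (le_max_right _ _) hk; omega
      simp [F.bq, F.fq, h1, h2]
    · rintro j - v ⟨M, hM⟩
      refine ⟨max M (1 - j), fun k hk => ?_⟩
      have h1 := hM k (le_trans (le_max_left _ _) hk)
      have h2 : k + j ≠ 0 := by have := le_trans (le_max_right _ _) hk; omega
      simp [F.bb k j, F.fb, h1, h2]
    · rintro j - v ⟨M, hM⟩
      refine ⟨max M (1 - j), fun k hk => ?_⟩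
      have h1 := hM k (le_trans (le_max_left _ _) hk)
      have h2 : k + j + 1 ≠ 0 := by have := le_trans (le_max_right _ _) hk; omega
      simp [F.ff k j, ← F.fb, h1, h2]
  have : v ∈ F.fin := h ▸ Submodule.mem_top
  exact this

/-- normally ordered boson bilinear -/
def nb (k l : ℤ) : V →ₗ[A] V := if k ≤ l then F.b k ∘ₗ F.b l else F.b l ∘ₗ F.b k
/-- normally ordered fermion bilinear -/
def nf (k l : ℤ) : V →ₗ[A] V := if k ≤ l then F.f k ∘ₗ F.f l else -(F.f l ∘ₗ F.f k)

theorem supp_of {g : ℤ → V} (x y : ℤ) (h : ∀ k, (k < x ∨ y < k) → g k = 0) :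
    (Function.support g).Finite := by
  refine (Set.finite_Icc x y).subset fun k hk => ?_
  by_contra hc
  apply hk
  apply h
  simp only [Set.mem_Icc, not_and_or, not_le] at hc
  exact hc

theorem nb_fin (m : ℤ) (v : V) : (Function.support fun k => F.nb k (m - k) v).Finite := by
  obtain ⟨M, hM⟩ := F.locfin v
  refine supp_of (min (m - M) M) (max (m-M) M) fun k hk => ?_
  have : M ≤ max k (m - k) := by omega
  unfold nb
  split_ifs with h
  · simp [(hM (m - k) (by omega)).1]
  · simp [(hM k (by omega)).1]

theorem nf_fin (m : ℤ) (a : ℤ → A) (v : V) :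
    (Function.support fun n => a n • F.nf (-n-1) (m + n) v).Finite := by
  obtain ⟨M, hM⟩ := F.locfin v
  refine supp_of (-M - 1) (M - m) fun k hk => ?_
  unfold nf
  split_ifs with h
  · simp [(hM (m + k) (by omega)).2]
  · simp [(hM (-k - 1) (by omega)).2]

theorem fb_fin (m : ℤ) (v : V) : (Function.support fun k => F.f (m - k) (F.b k v)).Finite := by
  obtain ⟨M, hM⟩ := F.locfin v
  refine supp_of (m - M) M fun k hk => ?_
  by_cases h : M ≤ k
  · simp [(hM k h).1]
  · simp [F.fb, (hM (m - k) (by omega)).2]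

/-- locally finite sum of operators -/
def lsum (g : ℤ → V →ₗ[A] V) (h : ∀ v, (Function.support fun k => g k v).Finite) : V →ₗ[A] V where
  toFun v := ∑ᶠ k, g k v
  map_add' v w := by
    simp only [map_add]
    exact finsum_add_distrib (h v) (h w)
  map_smul' a v := by
    simp only [map_smul, RingHom.id_apply]
    exact (smul_finsum' a (h v)).symm

theorem lsum_comm (g : ℤ → V →ₗ[A] V) (h) (ε : A) (X : V →ₗ[A] V) (v w w' : V) (k₁ k₂ : ℤ)
    (H : ∀ k, g k (X v) = ε • X (g k v) + ((if k = k₁ then w else 0) + if k = k₂ then w' else 0)) :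
    lsum g h (X v) = ε • X (lsum g h v) + (w + w') := by
  change ∑ᶠ k, g k (X v) = ε • X (∑ᶠ k, g k v) + _
  have h1 : ε • X (∑ᶠ k, g k v) = ∑ᶠ k, ε • X (g k v) :=
    ((ε • X).toAddMonoidHom.map_finsum (h v))
  have s1 : (Function.support fun k => ε • X (g k v)).Finite :=
    (h v).subset fun k hk hk' => hk (by simp only [] at hk' ⊢; rw [hk']; simp)
  have s2 : ∀ (k₁ : ℤ) (w : V), (Function.support fun k => if k = k₁ then w else 0).Finite :=
    fun k₁ w => (Set.finite_singleton k₁).subset fun k hk => by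
      by_contra hh; exact hk (if_neg hh)
  have s3 : ∀ (k₁ : ℤ) (w : V), (∑ᶠ k, if k = k₁ then w else 0) = w := fun k₁ w => by
    rw [finsum_eq_single _ k₁ (fun k hk => if_neg hk), if_pos rfl]
  rw [h1, finsum_congr H, finsum_add_distrib s1, finsum_add_distrib (s2 _ _) (s2 _ _), s3, s3]
  exact ((s2 k₁ w).union (s2 k₂ w')).subset (Function.support_add _ _)

/-- boson part -/
def LB (m : ℤ) : V →ₗ[A] V := lsum (fun k => F.nb k (m - k)) (F.nb_fin m)
/-- fermion part -/
def LF (m : ℤ) : V →ₗ[A] V :=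
  lsum (fun n => (((2 * n + m + 1 : ℤ) : A) * F.c) • F.nf (-n-1) (m + n)) (F.nf_fin m _)
/-- Virasoro mode -/
def L (m : ℤ) : V →ₗ[A] V := F.c • F.LB m + F.c • F.LF m
/-- supercurrent mode -/
def G (m : ℤ) : V →ₗ[A] V := lsum (fun k => F.f (m - k) ∘ₗ F.b k) (F.fb_fin m)

theorem nb_b (k l j : ℤ) (v : V) : F.nb k l (F.b j v) = F.b j (F.nb k l v) +
    ((if k = -j then (k:A) • F.b l v else 0) + if l = -j then (l:A) • F.b k v else 0) := by
  have e1 : k = -j ↔ k + j = 0 := by omega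
  have e2 : l = -j ↔ l + j = 0 := by omega
  simp only [e1, e2]
  unfold nb
  split_ifs with h h1 h2 h2 h1 h2 h2 <;>
    simp only [LinearMap.comp_apply, F.bb k j, F.bb l j, map_add, map_smul, h1, h2,
      if_true, if_false, zero_smul, map_zero] <;> module

theorem nb_q (k l : ℤ) (v : V) : F.nb k l (F.q v) = F.q (F.nb k l v) +
    ((if k = 0 then F.τ • F.b l v else 0) + if l = 0 then F.τ • F.b k v else 0) := by
  unfold nb
  split_ifs with h h1 h2 h2 h1 h2 h2 <;>
    simp only [LinearMap.comp_apply, F.bq, map_add, map_smul, h1, h2,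
      if_true, if_false, zero_smul, map_zero] <;> module

theorem nb_f (k l j : ℤ) (v : V) : F.nb k l (F.f j v) = F.f j (F.nb k l v) := by
  unfold nb
  split_ifs <;> simp [F.fb]

theorem nf_b (k l j : ℤ) (v : V) : F.nf k l (F.b j v) = F.b j (F.nf k l v) := by
  unfold nf
  split_ifs <;> simp [F.fb]

theorem nf_q (k l : ℤ) (v : V) : F.nf k l (F.q v) = F.q (F.nf k l v) := by
  unfold nf
  split_ifs <;> simp [F.fq]

theorem nf_f (k l j : ℤ) (v : V) : F.nf k l (F.f j v) = F.f j (F.nf k l v) +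
    ((if k = -j-1 then - F.f l v else 0) + if l = -j-1 then F.f k v else 0) := by
  have e1 : k = -j-1 ↔ k + j + 1 = 0 := by omega
  have e2 : l = -j-1 ↔ l + j + 1 = 0 := by omega
  simp only [e1, e2]
  unfold nf
  split_ifs with h h1 h2 h2 h1 h2 h2 <;>
    simp only [LinearMap.comp_apply, LinearMap.neg_apply, F.ff k j, F.ff l j, map_add, map_neg,
      map_smul, h1, h2, if_true, if_false, zero_smul, map_zero] <;> module

theorem LB_b (m j : ℤ) (v : V) : F.LB m (F.b j v) = F.b j (F.LB m v) +
    (((-j : ℤ):A) • F.b (m + j) v + ((-j : ℤ):A) • F.b (m + j) v) := by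
  have := lsum_comm (fun k => F.nb k (m - k)) (F.nb_fin m) 1 (F.b j) v
    (((-j : ℤ):A) • F.b (m + j) v) (((-j : ℤ):A) • F.b (m + j) v) (-j) (m + j) (fun k => by
      have e : k = m + j ↔ m - k = -j := by omega
      rw [F.nb_b, one_smul]
      simp only [e]
      congr 2
      · split_ifs with h
        · subst h; rw [sub_neg_eq_add]
        · rfl
      · split_ifs with h
        · rw [h]; congr 3; omega
        · rfl)
  rwa [one_smul] at this

theorem LB_q (m : ℤ) (v : V) : F.LB m (F.q v) = F.q (F.LB m v) +
    (F.τ • F.b m v + F.τ • F.b m v) := by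
  have := lsum_comm (fun k => F.nb k (m - k)) (F.nb_fin m) 1 F.q v
    (F.τ • F.b m v) (F.τ • F.b m v) 0 m (fun k => by
      have e : k = m ↔ m - k = 0 := by omega
      rw [F.nb_q, one_smul]
      simp only [e]
      congr 2
      · split_ifs with h
        · subst h; rw [sub_zero]
        · rfl
      · split_ifs with h
        · congr 3; omega
        · rfl)
  rwa [one_smul] at this

theorem LB_f (m j : ℤ) (v : V) : F.LB m (F.f j v) = F.f j (F.LB m v) := by
  have := lsum_comm (fun k => F.nb k (m - k)) (F.nb_fin m) 1 (F.f j) v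
    0 0 0 0 (fun k => by simp [F.nb_f])
  simp only [one_smul, add_zero] at this
  exact this

theorem LF_b (m j : ℤ) (v : V) : F.LF m (F.b j v) = F.b j (F.LF m v) := by
  have := lsum_comm (fun n => (((2 * n + m + 1 : ℤ) : A) * F.c) • F.nf (-n-1) (m + n))
    (F.nf_fin m _) 1 (F.b j) v 0 0 0 0 (fun k => by simp [F.nf_b])
  simp only [one_smul, add_zero] at this
  exact this

theorem LF_q (m : ℤ) (v : V) : F.LF m (F.q v) = F.q (F.LF m v) := by
  have := lsum_comm (fun n => (((2 * n + m + 1 : ℤ) : A) * F.c) • F.nf (-n-1) (m + n))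
    (F.nf_fin m _) 1 F.q v 0 0 0 0 (fun k => by simp [F.nf_q])
  simp only [one_smul, add_zero] at this
  exact this

theorem LF_f (m j : ℤ) (v : V) : F.LF m (F.f j v) = F.f j (F.LF m v) +
    ((-(((2 * j + m + 1 : ℤ) : A) * F.c)) • F.f (m + j) v +
      (-(((2 * j + m + 1 : ℤ) : A) * F.c)) • F.f (m + j) v) := by
  have := lsum_comm (fun n => (((2 * n + m + 1 : ℤ) : A) * F.c) • F.nf (-n-1) (m + n))
    (F.nf_fin m _) 1 (F.f j) v
    ((-(((2 * j + m + 1 : ℤ) : A) * F.c)) • F.f (m + j) v)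
    ((-(((2 * j + m + 1 : ℤ) : A) * F.c)) • F.f (m + j) v) j (-j-1-m) (fun k => by
      have e : k = -j-1-m ↔ m + k = -j-1 := by omega
      have e' : k = j ↔ -k-1 = -j-1 := by omega
      rw [LinearMap.smul_apply, F.nf_f, one_smul, LinearMap.smul_apply, map_smul, smul_add,
        smul_add]
      congr 2
      · simp only [← e']
        split_ifs with h
        · subst h; module
        · simp
      · simp only [e]
        split_ifs with h
        · have e1 : k = -j-1-m := by omega
          subst e1
          have e2 : -(-j-1-m) - 1 = m + j := by ring
          rw [e2]; push_cast; module
        · simp)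
  rwa [one_smul] at this

theorem L_b (m j : ℤ) (v : V) : F.L m (F.b j v) = F.b j (F.L m v) - (j : A) • F.b (m + j) v := by
  simp only [L, LinearMap.add_apply, LinearMap.smul_apply, F.LB_b, F.LF_b, map_add, map_smul]
  push_cast
  have hh := congrArg (fun a : A => (a * (j:A)) • F.b (m + j) v) F.hc
  linear_combination (norm := module) -hh

theorem L_q (m : ℤ) (v : V) : F.L m (F.q v) = F.q (F.L m v) + F.τ • F.b m v := by
  simp only [L, LinearMap.add_apply, LinearMap.smul_apply, F.LB_q, F.LF_q, map_add, map_smul]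
  have hh := congrArg (fun a : A => (a * F.τ) • F.b m v) F.hc
  linear_combination (norm := module) hh

theorem L_f (m j : ℤ) (v : V) : F.L m (F.f j v) = F.f j (F.L m v)
    - ((j:A) + ((m:A) + 1) * F.c) • F.f (m + j) v := by
  simp only [L, LinearMap.add_apply, LinearMap.smul_apply, F.LB_f, F.LF_f, map_add, map_smul]
  push_cast
  have hh := congrArg (fun a : A => (a * (2 * F.c * j + j + (m + 1) * F.c)) • F.f (m + j) v) F.hc
  linear_combination (norm := module) -hh

theorem G_b (m j : ℤ) (v : V) : F.G m (F.b j v) = F.b j (F.G m v) - (j : A) • F.f (m + j) v := by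
  have := lsum_comm (fun k => F.f (m - k) ∘ₗ F.b k) (F.fb_fin m) 1 (F.b j) v
    (((-j : ℤ):A) • F.f (m + j) v) 0 (-j) 0 (fun k => by
      have e : k = -j ↔ k + j = 0 := by omega
      simp only [LinearMap.comp_apply, F.bb k j, map_add, map_smul, F.fb _ j, e, one_smul]
      by_cases h : k + j = 0
      · obtain rfl := e.2 h
        simp
      · simp [h])
  rw [one_smul] at this
  unfold G
  rw [this]; push_cast; module

theorem G_q (m : ℤ) (v : V) : F.G m (F.q v) = F.q (F.G m v) + F.τ • F.f m v := by
  have := lsum_comm (fun k => F.f (m - k) ∘ₗ F.b k) (F.fb_fin m) 1 F.q v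
    (F.τ • F.f m v) 0 0 0 (fun k => by
      simp only [LinearMap.comp_apply, F.bq k, map_add, map_smul, F.fq, one_smul]
      split_ifs with h
      · subst h
        simp
      · simp)
  rw [one_smul] at this
  unfold G
  rw [this]; module

theorem G_f (m j : ℤ) (v : V) : F.G m (F.f j v) = - F.f j (F.G m v) + F.b (m + j + 1) v := by
  have := lsum_comm (fun k => F.f (m - k) ∘ₗ F.b k) (F.fb_fin m) (-1) (F.f j) v
    (F.b (m + j + 1) v) 0 (m + j + 1) 0 (fun k => by
      have e : k = m + j + 1 ↔ m - k + j + 1 = 0 := by omega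
      simp only [LinearMap.comp_apply, ← F.fb, F.ff _ j, e]
      by_cases h : m - k + j + 1 = 0
      · obtain rfl := e.2 h
        simp [show m - (m + j + 1) + j + 1 = 0 by ring]
      · simp [h])
  unfold G
  rw [this]; module

theorem L_vac (m : ℤ) (hm : -1 ≤ m) : F.L m F.vac = 0 := by
  have h1 : F.LB m F.vac = 0 := by
    refine finsum_eq_zero_of_forall_eq_zero fun k => ?_
    simp only [nb]
    split_ifs with h
    · simp [F.bvac (m - k) (by omega)]
    · simp [F.bvac k (by omega)]
  have h2 : F.LF m F.vac = 0 := by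
    refine finsum_eq_zero_of_forall_eq_zero fun k => ?_
    rw [LinearMap.smul_apply]
    by_cases h0 : 2 * k + m + 1 = 0
    · simp [h0]
    unfold nf
    split_ifs with h
    · simp [F.fvac (m + k) (by omega)]
    · simp [F.fvac (-k - 1) (by omega)]
  simp [L, h1, h2]

theorem G_vac (m : ℤ) (hm : -1 ≤ m) : F.G m F.vac = 0 := by
  refine finsum_eq_zero_of_forall_eq_zero fun k => ?_
  by_cases h : 0 ≤ k
  · simp [F.bvac k h]
  · simp [F.fb, F.fvac (m - k) (by omega)]

theorem eq_zero (X : V →ₗ[A] V) (h0 : X F.vac = 0) (hq : ∀ v, X v = 0 → X (F.q v) = 0)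
    (hb : ∀ k v, X v = 0 → X (F.b k v) = 0) (hf : ∀ k v, X v = 0 → X (F.f k v) = 0) (v : V) :
    X v = 0 := by
  have : LinearMap.ker X = ⊤ := F.cyc _ h0 hq (fun k _ => hb k) (fun k _ => hf k)
  rw [LinearMap.ker_eq_top.1 this]; rfl

theorem LL (m n : ℤ) (hm : -1 ≤ m) (hn : -1 ≤ n) (v : V) :
    F.L m (F.L n v) - F.L n (F.L m v) = ((m:A) - n) • F.L (m + n) v := by
  have := F.eq_zero (F.L m ∘ₗ F.L n - F.L n ∘ₗ F.L m - ((m:A) - n) • F.L (m + n)) ?_ ?_ ?_ ?_ v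
  · exact sub_eq_zero.1 this
  · by_cases h : m + n = -2
    · have : m = n := by omega
      subst this; simp
    · simp [F.L_vac m hm, F.L_vac n hn, F.L_vac (m + n) (by omega)]
  · intro v hv
    have h := congrArg F.q hv
    simp only [LinearMap.sub_apply, LinearMap.comp_apply, LinearMap.smul_apply, F.L_q, F.L_b,
      map_add, map_sub, map_smul, map_zero, add_comm n m] at h ⊢
    linear_combination (norm := module) h
  · intro k v hv
    have h := congrArg (F.b k) hv
    have e1 : n + (m + k) = m + n + k := by ring
    have e2 : m + (n + k) = m + n + k := by ring
    simp only [LinearMap.sub_apply, LinearMap.comp_apply, LinearMap.smul_apply, F.L_b,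
      map_add, map_sub, map_smul, map_zero, e1, e2] at h ⊢
    push_cast
    linear_combination (norm := module) h
  · intro k v hv
    have h := congrArg (F.f k) hv
    have e1 : n + (m + k) = m + n + k := by ring
    have e2 : m + (n + k) = m + n + k := by ring
    simp only [LinearMap.sub_apply, LinearMap.comp_apply, LinearMap.smul_apply, F.L_f,
      map_add, map_sub, map_smul, map_zero, e1, e2] at h ⊢
    push_cast
    linear_combination (norm := module) h

theorem LG (m n : ℤ) (hm : -1 ≤ m) (hn : -1 ≤ n) (v : V) :
    F.L m (F.G n v) - F.G n (F.L m v) = ((m - 2 * n - 1) * F.c) • F.G (m + n) v := by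
  have := F.eq_zero (F.L m ∘ₗ F.G n - F.G n ∘ₗ F.L m - ((m - 2 * n - 1) * F.c) • F.G (m + n))
    ?_ ?_ ?_ ?_ v
  · exact sub_eq_zero.1 this
  · by_cases h : m + n = -2
    · have h1 : m = -1 := by omega
      have h2 : n = -1 := by omega
      subst h1 h2; simp [F.L_vac, F.G_vac]; norm_num
    · simp [F.L_vac m hm, F.G_vac n hn, F.G_vac (m + n) (by omega)]
  · intro v hv
    have h := congrArg F.q hv
    simp only [LinearMap.sub_apply, LinearMap.comp_apply, LinearMap.smul_apply, F.L_q, F.L_b,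
      F.G_q, F.G_b, F.L_f, F.G_f,
      map_add, map_sub, map_smul, map_zero, add_comm n m] at h ⊢
    have hh := congrArg (fun a : A => (a * (n - m) * F.τ) • F.f (m + n) v) F.hc
    linear_combination (norm := module) h + hh
  · intro k v hv
    have h := congrArg (F.b k) hv
    have e1 : n + (m + k) = m + n + k := by ring
    have e2 : m + (n + k) = m + n + k := by ring
    simp only [LinearMap.sub_apply, LinearMap.comp_apply, LinearMap.smul_apply, F.L_b, F.G_b,
      F.L_f, map_add, map_sub, map_smul, map_zero, e1, e2] at h ⊢
    push_cast
    have hh := congrArg (fun a : A => (a * ((n:A) - m) * k) • F.f (m + n + k) v) F.hc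
    linear_combination (norm := module) h - hh
  · intro k v hv
    have h := congrArg (F.f k) hv
    have e1 : n + (m + k) + 1 = m + n + k + 1 := by ring
    have e2 : m + (n + k + 1) = m + n + k + 1 := by ring
    simp only [LinearMap.sub_apply, LinearMap.comp_apply, LinearMap.smul_apply, F.L_b, F.G_f,
      F.L_f, map_add, map_sub, map_smul, map_zero, map_neg, e1, e2] at h ⊢
    push_cast
    have hh := congrArg (fun a : A => (a * (n + 1:A)) • F.b (m + n + k + 1) v) F.hc
    linear_combination (norm := module) - h + hh

theorem GG (m n : ℤ) (hm : -1 ≤ m) (hn : -1 ≤ n) (hmn : -1 ≤ m + n + 1) (v : V) :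
    F.G m (F.G n v) + F.G n (F.G m v) = (2 : A) • F.L (m + n + 1) v := by
  have := F.eq_zero (F.G m ∘ₗ F.G n + F.G n ∘ₗ F.G m - (2 : A) • F.L (m + n + 1))
    ?_ ?_ ?_ ?_ v
  · exact sub_eq_zero.1 this
  · simp [F.G_vac m hm, F.G_vac n hn, F.L_vac (m + n + 1) (by omega)]
  · intro v hv
    have h := congrArg F.q hv
    simp only [LinearMap.sub_apply, LinearMap.add_apply, LinearMap.comp_apply,
      LinearMap.smul_apply, F.L_q, F.L_b, F.G_q, F.G_b, F.L_f, F.G_f,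
      map_add, map_sub, map_smul, map_zero, add_comm n m] at h ⊢
    linear_combination (norm := module) h
  · intro k v hv
    have h := congrArg (F.b k) hv
    have e1 : n + (m + k) + 1 = m + n + k + 1 := by ring
    have e2 : m + (n + k) + 1 = m + n + k + 1 := by ring
    have e3 : m + n + 1 + k = m + n + k + 1 := by ring
    simp only [LinearMap.sub_apply, LinearMap.add_apply, LinearMap.comp_apply,
      LinearMap.smul_apply, F.L_b, F.G_b, F.G_f,
      F.L_f, map_add, map_sub, map_smul, map_zero, e1, e2, e3] at h ⊢
    push_cast
    linear_combination (norm := module) h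
  · intro k v hv
    have h := congrArg (F.f k) hv
    have e1 : n + (m + k + 1) = m + n + k + 1 := by ring
    have e2 : m + (n + k + 1) = m + n + k + 1 := by ring
    have e3 : m + n + 1 + k = m + n + k + 1 := by ring
    simp only [LinearMap.sub_apply, LinearMap.add_apply, LinearMap.comp_apply,
      LinearMap.smul_apply, F.L_b, F.G_b, F.G_f,
      F.L_f, map_add, map_sub, map_smul, map_zero, map_neg, e1, e2, e3] at h ⊢
    push_cast
    have hh := congrArg (fun a : A => (a * (m + n + 2:A)) • F.f (m + n + k + 1) v) F.hc
    linear_combination (norm := module) h + hh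

end Fock

namespace Fock

variable {A V : Type*} [CommRing A] [AddCommGroup V] [Module A V] (F : Fock A V)

theorem final1 (h s d e : A) (N i j : ℤ) (hN : 0 ≤ N) (hi : 0 ≤ i) (hj : 0 ≤ j) (h0 : i ≠ j)
    (v : V) :
    h • (F.L (i + N - 1) (h • (F.L (j + N - 1) v + s • F.b j v + e • v)) +
        s • F.b i (h • (F.L (j + N - 1) v + s • F.b j v + e • v)) +
        d • h • (F.L (j + N - 1) v + s • F.b j v + e • v)) -
      h • (F.L (j + N - 1) (h • (F.L (i + N - 1) v + s • F.b i v + d • v)) +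
        s • F.b j (h • (F.L (i + N - 1) v + s • F.b i v + d • v)) +
        e • h • (F.L (i + N - 1) v + s • F.b i v + d • v)) =
    (h * ((i - j : ℤ) : A)) • h • (F.L (i + j + N - 1 + N - 1) v + s • F.b (i + j + N - 1) v +
      (0 : A) • v) := by
  have hL := F.LL (i + N - 1) (j + N - 1) (by omega) (by omega) v
  have hB := F.bb i j v
  have : (if i + j = 0 then (i : A) else 0) = 0 := if_neg (by omega)
  rw [this] at hB
  simp only [map_add, map_smul, F.L_b]
  have e1 : i + N - 1 + (j + N - 1) = i + j + N - 1 + N - 1 := by ring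
  have e2 : i + N - 1 + j = i + j + N - 1 := by ring
  have e3 : j + N - 1 + i = i + j + N - 1 := by ring
  rw [e1] at hL
  rw [e2, e3]
  push_cast at hL ⊢
  have hL' := congrArg (fun w => (h * h) • w) hL
  have hB' := congrArg (fun w => (h * h * (s * s)) • w) hB
  linear_combination (norm := module) hL' + hB'

theorem final2 (h s d : A) (N i n : ℤ) (hN : 0 ≤ N) (hi : 0 ≤ i) (hn : 0 ≤ n) (v : V) :
    h • (F.L (i + N - 1) (h • (s • F.f n v + F.G (n + N - 1) v)) +
        s • F.b i (h • (s • F.f n v + F.G (n + N - 1) v)) +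
        d • h • (s • F.f n v + F.G (n + N - 1) v)) -
      h • (s • F.f n (h • (F.L (i + N - 1) v + s • F.b i v + d • v)) +
        F.G (n + N - 1) (h • (F.L (i + N - 1) v + s • F.b i v + d • v))) =
    (h * ((i - N - 2 * n : ℤ) : A) * F.c) • h • (s • F.f (i + n + N - 1) v +
      F.G (i + n + N - 1 + N - 1) v) := by
  have hc := F.hc
  have hL := F.LG (i + N - 1) (n + N - 1) (by omega) (by omega) v
  have hB := F.fb n i v
  simp only [map_add, map_smul, F.L_f, F.G_b, hB]
  have e1 : i + N - 1 + (n + N - 1) = i + n + N - 1 + N - 1 := by ring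
  have e2 : i + N - 1 + n = i + n + N - 1 := by ring
  have e3 : n + N - 1 + i = i + n + N - 1 := by ring
  rw [e1] at hL
  rw [e2, e3]
  push_cast at hL ⊢
  have hL' := congrArg (fun w => (h * h) • w) hL
  have hc' := congrArg (fun a : A => ((a * ((i : A) - n)) * h * h * s) • F.f (i + n + N - 1) v) hc
  linear_combination (norm := module) hL' - hc'

theorem final3 (h s : A) (N n m : ℤ) (hN : 0 ≤ N) (hn : 0 ≤ n) (hm : 0 ≤ m) (v : V) :
    h • (s • F.f n (h • (s • F.f m v + F.G (m + N - 1) v)) +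
        F.G (n + N - 1) (h • (s • F.f m v + F.G (m + N - 1) v))) +
      h • (s • F.f m (h • (s • F.f n v + F.G (n + N - 1) v)) +
        F.G (m + N - 1) (h • (s • F.f n v + F.G (n + N - 1) v))) =
    (2 * h) • h • (F.L (n + m + N + N - 1) v + s • F.b (n + m + N) v + (0 : A) • v) := by
  have hL := F.GG (n + N - 1) (m + N - 1) (by omega) (by omega) (by omega) v
  have hB := F.ff n m v
  have : (if n + m + 1 = 0 then (1 : A) else 0) = 0 := if_neg (by omega)
  rw [this] at hB
  simp only [map_add, map_smul, F.G_f]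
  have e1 : n + N - 1 + (m + N - 1) + 1 = n + m + N + N - 1 := by ring
  have e2 : n + N - 1 + m + 1 = n + m + N := by ring
  have e3 : m + N - 1 + n + 1 = n + m + N := by ring
  rw [e1] at hL
  rw [e2, e3]
  have hL' := congrArg (fun w => (h * h) • w) hL
  have hB' := congrArg (fun w => (h * h * (s * s)) • w) hB
  linear_combination (norm := module) hL' + hB'

end Fock

/-- contraction on the odd factor -/
def cT (a : ℕ+) : Podd K →ₗ[R K] Podd K := CliffordAlgebra.contractLeft (Finsupp.lapply a)

/-- multiplication on the odd factor -/
def eT (a : ℕ+) : Podd K →ₗ[R K] Podd K :=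
  LinearMap.mulLeft (R K) (ExteriorAlgebra.ι (R K) (Finsupp.single a 1))

theorem cT_cT (a b : ℕ+) (p : Podd K) : cT K a (cT K b p) = -cT K b (cT K a p) :=
  CliffordAlgebra.contractLeft_comm _ _ _

theorem eT_eT (a b : ℕ+) (p : Podd K) : eT K a (eT K b p) = -eT K b (eT K a p) := by
  simp only [eT, LinearMap.mulLeft_apply, ← mul_assoc]
  rw [eq_neg_of_add_eq_zero_left (ExteriorAlgebra.ι_add_mul_swap _ _), neg_mul]

theorem cT_eT (a b : ℕ+) (p : Podd K) :
    cT K a (eT K b p) = (if b = a then (1 : R K) else 0) • p - eT K b (cT K a p) := by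
  refine (CliffordAlgebra.contractLeft_ι_mul _ _ _).trans ?_
  rw [Finsupp.lapply_apply, Finsupp.single_apply]
  rfl

theorem cT_one (a : ℕ+) : cT K a 1 = 0 := CliffordAlgebra.contractLeft_one _ _

/-- constructor of positive naturals -/
def pn (k : ℕ) (h : 0 < k) : ℕ+ := ⟨k, h⟩

theorem pn_coe (k : ℕ) (h : 0 < k) : ((pn k h : ℕ+) : ℕ) = k := rfl

/-- linear version of `bos` -/
def bosL (k : ℤ) : SuperSpace K →ₗ[R K] SuperSpace K :=
  if 0 ≤ k then (LaurentPolynomial.T 1 : R K) •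
    LinearMap.rTensor (Podd K) (MvPolynomial.pderiv (R := R K) k.toNat).toLinearMap
  else (((-k : ℤ) : R K) * LaurentPolynomial.T (-1)) •
    LinearMap.rTensor (Podd K) (LinearMap.mulLeft (R K) (MvPolynomial.X (-k).toNat))

/-- linear version of `fer` -/
def ferL (n : ℤ) : SuperSpace K →ₗ[R K] SuperSpace K :=
  if h : 0 ≤ n then (LaurentPolynomial.T 1 : R K) • LinearMap.lTensor (Pev K)
    (cT K (pn (n + 1).toNat (by omega)))
  else (LaurentPolynomial.T (-1) : R K) • LinearMap.lTensor (Pev K)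
    (eT K (pn (-n).toNat (by omega)))

/-- linear version of `mX 0` -/
def qL : SuperSpace K →ₗ[R K] SuperSpace K :=
  LinearMap.rTensor (Podd K) (LinearMap.mulLeft (R K) (MvPolynomial.X 0))

theorem bos_eq (k : ℤ) (v : SuperSpace K) : bos K k v = bosL K k v := by
  unfold bos bosL
  split_ifs <;> rfl

theorem fer_eq (k : ℤ) (v : SuperSpace K) : fer K k v = ferL K k v := by
  unfold fer ferL
  split_ifs <;> rfl

/-- the boson mode on the polynomial factor -/
def bosP (k : ℤ) : Pev K →ₗ[R K] Pev K :=
  if 0 ≤ k then (LaurentPolynomial.T 1 : R K) •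
    (MvPolynomial.pderiv (R := R K) k.toNat).toLinearMap
  else (((-k : ℤ) : R K) * LaurentPolynomial.T (-1)) •
    (LinearMap.mulLeft (R K) (MvPolynomial.X (-k).toNat))

/-- the fermion mode on the odd factor -/
def ferP (n : ℤ) : Podd K →ₗ[R K] Podd K :=
  if h : 0 ≤ n then (LaurentPolynomial.T 1 : R K) •
    (cT K (pn (n + 1).toNat (by omega)))
  else (LaurentPolynomial.T (-1) : R K) •
    (eT K (pn (-n).toNat (by omega)))

theorem bosL_eq (k : ℤ) : bosL K k = LinearMap.rTensor (Podd K) (bosP K k) := by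
  unfold bosL bosP
  split_ifs <;> rw [LinearMap.rTensor_smul]

theorem ferL_eq (k : ℤ) : ferL K k = LinearMap.lTensor (Pev K) (ferP K k) := by
  unfold ferL ferP
  split_ifs <;> rw [LinearMap.lTensor_smul]

theorem T_one_neg : (LaurentPolynomial.T 1 : R K) * LaurentPolynomial.T (-1) = 1 := by
  rw [← LaurentPolynomial.T_add]; simp

theorem pderiv_comm' (a b : ℕ) (p : Pev K) :
    MvPolynomial.pderiv a (MvPolynomial.pderiv b p) =
      MvPolynomial.pderiv b (MvPolynomial.pderiv a p) := by
  have : ⁅MvPolynomial.pderiv (R := R K) a, MvPolynomial.pderiv (R := R K) b⁆ = 0 := by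
    apply MvPolynomial.derivation_ext
    intro i
    rw [Derivation.commutator_apply]
    simp only [MvPolynomial.pderiv_X, Derivation.zero_apply]
    have h : ∀ (a b c d : ℕ), MvPolynomial.pderiv a ((Pi.single c 1 : ℕ → Pev K) d) = 0 := by
      intro a b c d
      by_cases h : d = c
      · subst h; simp
      · simp [Pi.single_eq_of_ne h]
    simp [h a b, h b a]
  have h2 := congrArg (fun d => d p) this
  rw [Derivation.commutator_apply] at h2
  exact sub_eq_zero.1 h2

theorem bosP_comm (m n : ℤ) (p : Pev K) : bosP K m (bosP K n p) = bosP K n (bosP K m p) +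
    (if m + n = 0 then (m : R K) else 0) • p := by
  have hT := T_one_neg K
  unfold bosP
  by_cases hm : 0 ≤ m <;> by_cases hn : 0 ≤ n
  · have : (if m + n = 0 then (m : R K) else 0) = 0 := by
      split_ifs with h
      · have : m = 0 := by omega
        simp [this]
      · rfl
    rw [this, if_pos hm, if_pos hn]
    simp only [LinearMap.smul_apply, map_smul, Derivation.coeFn_coe]
    rw [pderiv_comm']; module
  · rw [if_pos hm, if_neg hn]
    simp only [LinearMap.smul_apply, map_smul, Derivation.coeFn_coe,
      LinearMap.mulLeft_apply, Derivation.leibniz, smul_eq_mul, MvPolynomial.pderiv_X]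
    by_cases h : m + n = 0
    · obtain rfl : n = -m := by omega
      rw [neg_neg, Pi.single_eq_same, mul_one, if_pos h]
      have hh := congrArg (fun a : R K => (a * m) • p) hT
      linear_combination (norm := module) hh
    · rw [if_neg h, Pi.single_eq_of_ne (by omega)]
      simp only [mul_zero]
      module
  · rw [if_neg hm, if_pos hn]
    simp only [LinearMap.smul_apply, map_smul, Derivation.coeFn_coe,
      LinearMap.mulLeft_apply, Derivation.leibniz, smul_eq_mul, MvPolynomial.pderiv_X]
    by_cases h : m + n = 0
    · obtain rfl : n = -m := by omega
      rw [Pi.single_eq_same, mul_one, if_pos h]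
      have hh := congrArg (fun a : R K => (a * m) • p) hT
      push_cast
      linear_combination (norm := module) hh
    · rw [if_neg h, Pi.single_eq_of_ne (by omega)]
      simp only [mul_zero]
      module
  · rw [if_neg hm, if_neg hn, if_neg (by omega)]
    simp only [LinearMap.smul_apply, map_smul, LinearMap.mulLeft_apply]
    rw [mul_left_comm]; module

theorem bosP_X (m : ℤ) (p : Pev K) : bosP K m (MvPolynomial.X 0 * p) =
    MvPolynomial.X 0 * bosP K m p +
      (if m = 0 then (LaurentPolynomial.T 1 : R K) else 0) • p := by
  unfold bosP
  by_cases hm : 0 ≤ m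
  · rw [if_pos hm]
    simp only [LinearMap.smul_apply, Derivation.coeFn_coe,
      Derivation.leibniz, smul_eq_mul, MvPolynomial.pderiv_X, mul_smul_comm]
    by_cases h : m = 0
    · subst h
      simp
    · rw [if_neg h, Pi.single_eq_of_ne (by omega)]
      simp only [mul_zero]
      module
  · rw [if_neg hm, if_neg (by omega)]
    simp only [LinearMap.smul_apply, LinearMap.mulLeft_apply, mul_smul_comm]
    rw [mul_left_comm]; module

theorem ferP_pos (n : ℤ) (h : 0 ≤ n) :
    ferP K n = (LaurentPolynomial.T 1 : R K) • cT K (pn (n + 1).toNat (by omega)) := dif_pos h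

theorem ferP_neg (n : ℤ) (h : ¬ 0 ≤ n) :
    ferP K n = (LaurentPolynomial.T (-1) : R K) • eT K (pn (-n).toNat (by omega)) := dif_neg h

theorem ferP_comm (m n : ℤ) (p : Podd K) : ferP K m (ferP K n p) = -ferP K n (ferP K m p) +
    (if m + n + 1 = 0 then (1 : R K) else 0) • p := by
  have hT := T_one_neg K
  have key : ∀ (m n : ℤ) (hm : 0 ≤ m) (hn : ¬ 0 ≤ n),
      (if pn (-n).toNat (by omega) = pn (m + 1).toNat (by omega) then (1 : R K) else 0) =
        if m + n + 1 = 0 then (1 : R K) else 0 := by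
    intro m n hm hn
    congr 1
    rw [← PNat.coe_inj, pn_coe, pn_coe, eq_iff_iff]
    omega
  by_cases hm : 0 ≤ m <;> by_cases hn : 0 ≤ n
  · rw [ferP_pos K m hm, ferP_pos K n hn, if_neg (by omega)]
    simp only [LinearMap.smul_apply, map_smul]
    rw [cT_cT]; module
  · rw [ferP_pos K m hm, ferP_neg K n hn]
    simp only [LinearMap.smul_apply, map_smul]
    rw [cT_eT, key m n hm hn]
    generalize (if m + n + 1 = 0 then (1 : R K) else 0) = z
    have hh := congrArg (fun a : R K => (a * z) • p) hT
    linear_combination (norm := module) hh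
  · rw [ferP_neg K m hm, ferP_pos K n hn]
    simp only [LinearMap.smul_apply, map_smul]
    rw [cT_eT, key n m hn hm, add_comm n m]
    generalize (if m + n + 1 = 0 then (1 : R K) else 0) = z
    have hh := congrArg (fun a : R K => (a * z) • p) hT
    linear_combination (norm := module) hh
  · rw [ferP_neg K m hm, ferP_neg K n hn, if_neg (by omega)]
    simp only [LinearMap.smul_apply, map_smul]
    rw [eT_eT]; module

theorem cyc_aux (W : Submodule (R K) (SuperSpace K)) (h1 : (1 : Pev K) ⊗ₜ[R K] (1 : Podd K) ∈ W)
    (hq : ∀ v ∈ W, qL K v ∈ W) (hb : ∀ k, k < 0 → ∀ v ∈ W, bosL K k v ∈ W)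
    (hf : ∀ k, k < 0 → ∀ v ∈ W, ferL K k v ∈ W) : W = ⊤ := by
  have hT := T_one_neg K
  have hX : ∀ (a : ℕ) (p : Pev K) (l : Podd K), p ⊗ₜ[R K] l ∈ W →
      (MvPolynomial.X a * p) ⊗ₜ[R K] l ∈ W := by
    intro a p l h
    rcases Nat.eq_zero_or_pos a with rfl | ha
    · have := hq _ h
      rwa [qL, LinearMap.rTensor_tmul, LinearMap.mulLeft_apply] at this
    · have := W.smul_mem (LaurentPolynomial.T 1 * LaurentPolynomial.C ((a : K)⁻¹))
        (hb (-(a:ℤ)) (by omega) _ h)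
      rw [bosL_eq, LinearMap.rTensor_tmul, bosP, if_neg (by omega), LinearMap.smul_apply,
        TensorProduct.smul_tmul', smul_smul, LinearMap.mulLeft_apply, neg_neg,
        Int.toNat_natCast] at this
      have e : LaurentPolynomial.T 1 * LaurentPolynomial.C ((a : K)⁻¹) *
          (((a : ℤ) : R K) * LaurentPolynomial.T (-1)) = 1 := by
        have e1 : LaurentPolynomial.C ((a : K)⁻¹) * ((a : ℤ) : R K) = 1 := by
          have : ((a : ℤ) : R K) = LaurentPolynomial.C (a : K) := by simp
          rw [this, ← map_mul, inv_mul_cancel₀ (by exact_mod_cast ha.ne'), map_one]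
        linear_combination (LaurentPolynomial.C ((a : K)⁻¹) * ((a : ℤ) : R K)) * hT + e1
      rwa [e, one_smul] at this
  have hθ : ∀ (a : ℕ+) (l : Podd K), (1 : Pev K) ⊗ₜ[R K] l ∈ W →
      (1 : Pev K) ⊗ₜ[R K] (ExteriorAlgebra.ι (R K) (Finsupp.single a 1) * l) ∈ W := by
    intro a l h
    have ha := a.pos
    have := W.smul_mem (LaurentPolynomial.T 1 : R K) (hf (-(a:ℕ):ℤ) (by omega) _ h)
    have e : pn (-(-(a:ℕ):ℤ)).toNat (by omega) = a := by
      apply PNat.eq; rw [pn_coe]; omega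
    rw [ferL_eq, LinearMap.lTensor_tmul, ferP_neg K _ (by omega), LinearMap.smul_apply,
      TensorProduct.tmul_smul, smul_smul, hT, one_smul, e] at this
    exact this
  have hl : ∀ l : Podd K, (1 : Pev K) ⊗ₜ[R K] l ∈ W := by
    intro l
    induction l using CliffordAlgebra.left_induction with
    | algebraMap r =>
      rw [Algebra.algebraMap_eq_smul_one, TensorProduct.tmul_smul]
      exact W.smul_mem _ h1
    | add x y hx hy => rw [TensorProduct.tmul_add]; exact W.add_mem hx hy
    | ι_mul x m hx =>
      induction m using Finsupp.induction_linear with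
      | zero => simp
      | add f g hf hg =>
        rw [map_add, add_mul, TensorProduct.tmul_add]; exact W.add_mem hf hg
      | single a r =>
        have : Finsupp.single a r = r • Finsupp.single a (1 : R K) := by simp
        rw [this, map_smul, smul_mul_assoc, TensorProduct.tmul_smul]
        exact W.smul_mem _ (hθ a x hx)
  have hp : ∀ (p : Pev K) (l : Podd K), p ⊗ₜ[R K] l ∈ W := by
    intro p l
    induction p using MvPolynomial.induction_on with
    | C r =>
      have : (MvPolynomial.C r : Pev K) = r • 1 := by
        rw [MvPolynomial.smul_eq_C_mul, mul_one]
      rw [this, ← TensorProduct.smul_tmul']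
      exact W.smul_mem _ (hl l)
    | add p q hp hq => rw [TensorProduct.add_tmul]; exact W.add_mem hp hq
    | mul_X p a hp => rw [mul_comm]; exact hX a p l hp
  rw [eq_top_iff]
  rintro v -
  induction v using TensorProduct.induction_on with
  | zero => exact W.zero_mem
  | tmul p l => exact hp p l
  | add x y hx hy => exact W.add_mem hx hy

/-- the concrete Fock module -/
def fock : Fock (R K) (SuperSpace K) where
  b := bosL K
  f := ferL K
  q := qL K
  τ := LaurentPolynomial.T 1
  c := cs K (2 : K)⁻¹
  hc := by
    have : (2 : R K) = LaurentPolynomial.C 2 := (map_ofNat LaurentPolynomial.C 2).symm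
    rw [this, cs, ← map_mul, mul_inv_cancel₀ two_ne_zero, map_one]
  vac := 1 ⊗ₜ 1
  bb m n v := by
    induction v using TensorProduct.induction_on with
    | zero => simp
    | tmul p l =>
      simp only [bosL_eq, LinearMap.rTensor_tmul]
      rw [bosP_comm, TensorProduct.add_tmul, TensorProduct.smul_tmul']
    | add x y hx hy => simp only [map_add, smul_add, hx, hy]; abel
  ff m n v := by
    induction v using TensorProduct.induction_on with
    | zero =>
      simp only [map_zero, smul_zero, add_zero]
      exact (neg_zero (G := SuperSpace K)).symm
    | tmul p l =>
      simp only [ferL_eq, LinearMap.lTensor_tmul]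
      rw [ferP_comm, TensorProduct.tmul_add, TensorProduct.tmul_smul, TensorProduct.tmul_neg]
    | add x y hx hy => simp only [map_add, smul_add, hx, hy]; abel
  fb m n v := by
    rw [bosL_eq, ferL_eq]
    induction v using TensorProduct.induction_on with
    | zero => simp
    | tmul p l => simp only [LinearMap.lTensor_tmul, LinearMap.rTensor_tmul]
    | add x y hx hy => simp only [map_add, hx, hy]
  bq m v := by
    rw [bosL_eq, qL]
    induction v using TensorProduct.induction_on with
    | zero => simp
    | tmul p l =>
      simp only [LinearMap.rTensor_tmul, LinearMap.mulLeft_apply]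
      rw [bosP_X, TensorProduct.add_tmul, TensorProduct.smul_tmul']
    | add x y hx hy => simp only [map_add, smul_add, hx, hy]; abel
  fq m v := by
    rw [ferL_eq, qL]
    induction v using TensorProduct.induction_on with
    | zero => simp
    | tmul p l => simp only [LinearMap.lTensor_tmul, LinearMap.rTensor_tmul]
    | add x y hx hy => simp only [map_add, hx, hy]
  bvac m hm := by
    rw [bosL_eq, LinearMap.rTensor_tmul, bosP, if_pos hm]
    simp
  fvac m hm := by
    rw [ferL_eq, LinearMap.lTensor_tmul, ferP_pos K _ hm, LinearMap.smul_apply, cT_one,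
       smul_zero, TensorProduct.tmul_zero]
  cyc := cyc_aux K

theorem nb_eq (k l : ℤ) (v : SuperSpace K) : nb K k l v = (fock K).nb k l v := by
  unfold nb Fock.nb
  split_ifs <;> simp only [bos_eq] <;> rfl

theorem nf_eq (k l : ℤ) (v : SuperSpace K) : nf K k l v = (fock K).nf k l v := by
  unfold nf Fock.nf
  split_ifs <;> simp only [fer_eq] <;> rfl

theorem dXi_eq (i : ℤ) (hi : 0 ≤ i) (v : SuperSpace K) :
    dXi K i v = (LaurentPolynomial.T (-1) : R K) • (fock K).b i v := by
  change _ = _ • bosL K i v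
  rw [← bos_eq, dXi, bos, if_pos hi, if_pos hi]
  simp only [smul_smul]
  rw [mul_comm, T_one_neg, one_smul]

theorem dTi_eq (n : ℤ) (hn : 0 ≤ n) (v : SuperSpace K) :
    dTi K (n + 1) v = (LaurentPolynomial.T (-1) : R K) • (fock K).f n v := by
  change _ = _ • ferL K n v
  rw [← fer_eq, dTi, fer, dif_pos (by omega), dif_pos hn]
  simp only [smul_smul]
  rw [mul_comm, T_one_neg, one_smul]

theorem Hop_eq (N : ℤ) (D : ℤ → K) (i : ℤ) (hi : 0 ≤ i) (v : SuperSpace K) :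
    Hop K N D i v = hb K • ((fock K).L (i + N - 1) v +
      (LaurentPolynomial.T (-1) : R K) • (fock K).b i v +
      (if i ≤ N - 1 then cs K (D i) else 0) • v) := by
  have h1 : (∑ᶠ k : ℤ, nb K k (i + N - 1 - k) v) = (fock K).LB (i + N - 1) v :=
    finsum_congr fun k => nb_eq K _ _ v
  have h2 : (∑ᶠ n : ℤ, (((2 * n + i + N : ℤ) : R K) * cs K (2 : K)⁻¹) •
          nf K (-n - 1) (i + N - 1 + n) v) = (fock K).LF (i + N - 1) v :=
    finsum_congr fun k => by
      rw [nf_eq, LinearMap.smul_apply, show 2 * k + (i + N - 1) + 1 = 2 * k + i + N by ring]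
      rfl
  rw [Hop, h1, h2, dXi_eq K i hi, Fock.L, LinearMap.add_apply, LinearMap.smul_apply,
    LinearMap.smul_apply]
  change _ = hb K • ((cs K (2 : K)⁻¹ • _ + cs K (2 : K)⁻¹ • _) + _ + _)
  split_ifs <;> module

theorem Fop_eq (N : ℤ) (n : ℤ) (hn : 0 ≤ n) (v : SuperSpace K) :
    Fop K N n v = hb K • ((LaurentPolynomial.T (-1) : R K) • (fock K).f n v +
      (fock K).G (n + N - 1) v) := by
  have h1 : (∑ᶠ m : ℤ, fer K (n + N - 1 - m) (bos K m v)) = (fock K).G (n + N - 1) v :=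
    finsum_congr fun k => by rw [bos_eq, fer_eq]; rfl
  rw [Fop, h1, dTi_eq K n hn]
  module

/-- For `N ≥ 0` and scalars `D_0, …, D_{N−1}`, the operators `H_i`
(`i ∈ ℤ_{≥0}`) and `F_r` (`r = n + 1/2 ∈ ℤ_{≥0} + 1/2`) satisfy the Neveu–Schwarz super
Virasoro relations `[H_i, H_j] = ℏ(i−j) H_{i+j+N−1}`,
`[H_i, F_r] = ℏ((i−N+1)/2 − r) F_{i+r+N−1}` and `{F_r, F_s} = 2ℏ H_{r+s+N−1}`
(out-of-range right-hand subscripts only occur with vanishing scalar coefficient). -/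
theorem statement7 (N : ℤ) (hN : 0 ≤ N) (D : ℤ → K) :
    (∀ i j : ℤ, 0 ≤ i → 0 ≤ j → ∀ v : SuperSpace K,
      Hop K N D i (Hop K N D j v) - Hop K N D j (Hop K N D i v)
        = (hb K * ((i - j : ℤ) : R K)) • Hop K N D (i + j + N - 1) v) ∧
    (∀ i n : ℤ, 0 ≤ i → 0 ≤ n → ∀ v : SuperSpace K,
      Hop K N D i (Fop K N n v) - Fop K N n (Hop K N D i v)
        = (hb K * ((i - N - 2 * n : ℤ) : R K) * cs K (2 : K)⁻¹) •
            Fop K N (i + n + N - 1) v) ∧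
    (∀ n m : ℤ, 0 ≤ n → 0 ≤ m → ∀ v : SuperSpace K,
      Fop K N n (Fop K N m v) + Fop K N m (Fop K N n v)
        = (2 * hb K) • Hop K N D (n + m + N) v) := by
  refine ⟨?_, ?_, ?_⟩
  · intro i j hi hj v
    by_cases h0 : i = j
    · subst h0
      rw [sub_self, sub_self, Int.cast_zero, mul_zero, zero_smul]
    have hij : 0 ≤ i + j + N - 1 := by omega
    simp only [Hop_eq K N D _ hi, Hop_eq K N D _ hj, Hop_eq K N D _ hij]
    rw [if_neg (show ¬ i + j + N - 1 ≤ N - 1 by omega)]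
    exact (fock K).final1 _ _ _ _ N i j hN hi hj h0 v
  · intro i n hi hn v
    have key := (fock K).final2 (hb K) (LaurentPolynomial.T (-1))
      (if i ≤ N - 1 then cs K (D i) else 0) N i n hN hi hn v
    by_cases h0 : i - N - 2 * n = 0 ∧ i + n + N - 1 < 0
    · simp only [Hop_eq K N D _ hi, Fop_eq K N _ hn]
      refine key.trans ?_
      rw [h0.1, Int.cast_zero, mul_zero, zero_mul, zero_mul, zero_smul, zero_smul]
    have hij : 0 ≤ i + n + N - 1 := by omega
    simp only [Hop_eq K N D _ hi, Fop_eq K N _ hn, Fop_eq K N _ hij]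
    exact key
  · intro n m hn hm v
    have hij : 0 ≤ n + m + N := by omega
    simp only [Hop_eq K N D _ hij, Fop_eq K N _ hn, Fop_eq K N _ hm]
    rw [if_neg (show ¬ n + m + N ≤ N - 1 by omega)]
    exact (fock K).final3 _ _ N n m hN hn hm v

end
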